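/- Let m ≥ 0 and let ϑ(θ) = (1 − sin θ)/cos θ for θ ∈ (−π/2, π/2). The map T defined by T(θ, λ) := ((λ + m)·ϑ(θ), λ² − m²) is a bijection from (−π/2, π/2) × (m, +∞) onto (0, +∞) × (0, +∞); moreover, for every (a, μ) ∈ (0, +∞) × (0, +∞), the unique pair (θ, λ) ∈ (−π/2, π/2) × (m, +∞) with T(θ, λ) = (a, μ) satisfies λ = √(μ + m²) and ϑ(θ) = a/(√(μ + m²) + m). -/

import Mathlib

open Real Set

/-- The function ϑ(θ) = (1 − sin θ)/cos θ. -/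
noncomputable def vartheta (θ : ℝ) : ℝ := (1 - Real.sin θ) / Real.cos θ

/-!
The second component of `T` depends on `λ` alone and is a bijection `(m, ∞) → (0, ∞)` with inverse
`μ ↦ √(μ + m²)`. For fixed `λ` the first component is a positive multiple of
`ϑ(θ) = tan ((π/2 − θ)/2)`, a bijection `(−π/2, π/2) → (0, ∞)`. Hence `T` is bijective on the base
and on every fibre.
-/

theorem bijOn_prod_of_fiberwise {α β γ δ : Type*} {s : Set α} {t : Set β} {u : Set γ} {v : Set δ}
    {f : β → α → γ} {g : β → δ} (hg : BijOn g t v) (hf : ∀ b ∈ t, BijOn (f b) s u) :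
    BijOn (fun p : α × β => (f p.2 p.1, g p.2)) (s ×ˢ t) (u ×ˢ v) := by
  refine ⟨?mapsTo, ?injOn, ?surjOn⟩
  case mapsTo =>
    rintro ⟨a, b⟩ ⟨ha, hb⟩
    exact ⟨(hf b hb).mapsTo ha, hg.mapsTo hb⟩
  case injOn =>
    rintro ⟨a, b⟩ ⟨ha, hb⟩ ⟨a', b'⟩ ⟨ha', hb'⟩ heq
    obtain ⟨hfst, hsnd⟩ := Prod.mk.inj heq
    obtain rfl : b = b' := hg.injOn hb hb' hsnd
    obtain rfl : a = a' := (hf b hb).injOn ha ha' hfst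
    rfl
  case surjOn =>
    rintro ⟨c, d⟩ ⟨hc, hd⟩
    obtain ⟨b, hb, rfl⟩ := hg.surjOn hd
    obtain ⟨a, ha, rfl⟩ := (hf b hb).surjOn hc
    exact ⟨(a, b), ⟨ha, hb⟩, rfl⟩

theorem bijOn_mul_left_Ioi {K : Type*} [Field K] [LinearOrder K] [IsStrictOrderedRing K] {c : K}
    (hc : 0 < c) (b : K) : BijOn (c * ·) (Ioi b) (Ioi (c * b)) :=
  image_mul_left_Ioi hc b ▸ (mul_right_injective₀ hc.ne').injOn.bijOn_image

theorem leftInvOn_sqrt_add_sq (m : ℝ) :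
    LeftInvOn (fun μ => √(μ + m ^ 2)) (fun x => x ^ 2 - m ^ 2) (Ici 0) := fun x hx => by
  simp only [sub_add_cancel, sqrt_sq hx]

theorem bijOn_sq_sub_sq {m : ℝ} (hm : 0 ≤ m) :
    BijOn (fun x => x ^ 2 - m ^ 2) (Ioi m) (Ioi 0) := by
  have rightInv : RightInvOn (fun μ => √(μ + m ^ 2)) (fun x => x ^ 2 - m ^ 2) (Ioi 0) :=
    fun μ hμ => by
      simp only [sq_sqrt (add_nonneg (le_of_lt hμ) (sq_nonneg m)), add_sub_cancel_right]
  have leftInv := (leftInvOn_sqrt_add_sq m).mono (Ioi_subset_Ici hm)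
  refine InvOn.bijOn ⟨leftInv, rightInv⟩ ?_ ?_
  · exact fun x hx => sub_pos.2 (pow_lt_pow_left₀ hx hm two_ne_zero)
  · exact fun μ hμ => lt_sqrt_of_sq_lt (lt_add_of_pos_left _ hμ)

-- Where `sin (2 * x) = 0` both sides are `0`, by the convention `y / 0 = 0`.
theorem tan_eq_one_sub_cos_two_mul_div_sin_two_mul (x : ℝ) :
    tan x = (1 - cos (2 * x)) / sin (2 * x) := by
  rw [cos_two_mul_eq_one_sub, sin_two_mul, tan_eq_sin_div_cos]
  rcases eq_or_ne (sin x) 0 with hsin | hsin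
  · simp [hsin]
  · field_simp
    ring

theorem vartheta_eq_tan (θ : ℝ) : vartheta θ = tan ((π / 2 - θ) / 2) := by
  rw [tan_eq_one_sub_cos_two_mul_div_sin_two_mul, mul_div_cancel₀ _ two_ne_zero,
    cos_pi_div_two_sub, sin_pi_div_two_sub, vartheta]

theorem bijOn_tan_Ioo_zero_pi_div_two : BijOn tan (Ioo 0 (π / 2)) (Ioi 0) := by
  refine InvOn.bijOn (f' := arctan) ⟨?_, fun t _ => tan_arctan t⟩ ?_ ?_
  · exact fun x hx => arctan_tan (by linarith [hx.1, pi_pos]) hx.2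
  · exact fun x hx => tan_pos_of_pos_of_lt_pi_div_two hx.1 hx.2
  · exact fun t ht => ⟨arctan_pos.2 ht, arctan_lt_pi_div_two t⟩

theorem bijOn_vartheta : BijOn vartheta (Ioo (-(π / 2)) (π / 2)) (Ioi 0) := by
  have bijOn_half_complement :
      BijOn (fun θ => (π / 2 - θ) / 2) (Ioo (-(π / 2)) (π / 2)) (Ioo 0 (π / 2)) := by
    refine InvOn.bijOn (f' := fun x => π / 2 - 2 * x)
      ⟨fun θ _ => by ring, fun x _ => by ring⟩ ?_ ?_
    · exact fun θ hθ => ⟨by linarith [hθ.2], by linarith [hθ.1]⟩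
    · exact fun x hx => ⟨by linarith [hx.2], by linarith [hx.1]⟩
  exact (bijOn_tan_Ioo_zero_pi_div_two.comp bijOn_half_complement).congr
    fun θ _ => (vartheta_eq_tan θ).symm

/-- The map `T(θ, λ) = ((λ+m)ϑ(θ), λ² − m²)` is a bijection from
`(−π/2, π/2) × (m, ∞)` onto `(0, ∞) × (0, ∞)`, and its inverse is given by
`λ = √(μ+m²)` and `ϑ(θ) = a/(√(μ+m²)+m)`. -/
theorem stmt_10 (m : ℝ) (hm : 0 ≤ m) :
    Set.BijOn (fun p : ℝ × ℝ => ((p.2 + m) * vartheta p.1, p.2^2 - m^2))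
      ((Ioo (-(π/2)) (π/2)) ×ˢ (Ioi m)) ((Ioi (0:ℝ)) ×ˢ (Ioi (0:ℝ))) ∧
    ∀ a μ : ℝ, a ∈ Ioi (0:ℝ) → μ ∈ Ioi (0:ℝ) →
      ∀ θ lam : ℝ, θ ∈ Ioo (-(π/2)) (π/2) → lam ∈ Ioi m →
        ((lam + m) * vartheta θ, lam^2 - m^2) = (a, μ) →
          lam = Real.sqrt (μ + m^2) ∧ vartheta θ = a / (Real.sqrt (μ + m^2) + m) := by
  have add_pos_of_mem {lam : ℝ} (hlam : lam ∈ Ioi m) : 0 < lam + m :=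
    add_pos_of_pos_of_nonneg (hm.trans_lt hlam) hm
  constructor
  · refine bijOn_prod_of_fiberwise (f := fun lam θ => (lam + m) * vartheta θ)
      (bijOn_sq_sub_sq hm) fun lam hlam => ?_
    have bijOn_mul := bijOn_mul_left_Ioi (add_pos_of_mem hlam) 0
    rw [mul_zero] at bijOn_mul
    exact bijOn_mul.comp bijOn_vartheta
  · rintro _ _ - - θ lam - hlam ⟨⟩
    have sqrt_eq : √(lam ^ 2 - m ^ 2 + m ^ 2) = lam :=
      leftInvOn_sqrt_add_sq m (Ioi_subset_Ici hm hlam)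
    rw [sqrt_eq, mul_div_cancel_left₀ _ (add_pos_of_mem hlam).ne']
    exact ⟨rfl, rfl⟩
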